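/- arXiv:1910.09539 — 5 statements merged into one kernel-verified Lean document; each statement's English description precedes it below -/
import Mathlib

section
/- Suppose additionally that c > 0 and |K_l(t)| ≤ c(l+1) for all 0 ≤ l ≤ N′−1 and all t. Then for every positive integer n and every t, (d/dt) E_{s,t}[lⁿ] ≤ 4cn(1+e)·( E_{s,t}[lⁿ] + (en)ⁿ ); and in the special case n = 1 the stronger inequality (d/dt) E_{s,t}[l] ≤ c·( 2·E_{s,t}[l] + 1 ) holds. -/
/-!
Differentiating `E[w(l)] = ∑ w(l) φ_l²` along the walk and summing by parts leaves one term per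
edge, `2 K_l φ_l φ_{l+1} (w(l+1) - w(l))`, which AM-GM bounds by
`|K_l| (w(l+1) - w(l)) (φ_l² + φ_{l+1}²)`. For `w(l) = lⁿ` the growth condition and
`(l+1) ((l+1)ⁿ - lⁿ) ≤ n (l+1)ⁿ` turn the sum into `c n (E[(l+1)ⁿ] + E[lⁿ])`. Finally
`(l+1)ⁿ ≤ e lⁿ` when `l ≥ n`, since `(1 + 1/l)ⁿ ≤ e^(n/l)`, while `(l+1)ⁿ ≤ (e n)ⁿ` when `l < n`.
-/

open Finset

section ElementaryInequalities

variable {R : Type*} [CommRing R] [LinearOrder R] [IsStrictOrderedRing R]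

theorem two_mul_mul_mul_le_abs_mul_add_sq (k a b : R) :
    2 * (k * (a * b)) ≤ |k| * (a ^ 2 + b ^ 2) :=
  calc 2 * (k * (a * b)) ≤ 2 * |k * (a * b)| := by gcongr; exact le_abs_self _
    _ = |k| * (2 * |a| * |b|) := by rw [abs_mul, abs_mul]; ring
    _ ≤ |k| * (|a| ^ 2 + |b| ^ 2) := by gcongr; exact two_mul_le_add_sq _ _
    _ = |k| * (a ^ 2 + b ^ 2) := by rw [sq_abs, sq_abs]

theorem mul_pow_sub_pow_le {a b : R} (ha : 0 ≤ a) (hab : a ≤ b) (n : ℕ) :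
    b * (b ^ n - a ^ n) ≤ n * (b - a) * b ^ n := by
  obtain rfl | hn := eq_or_ne n 0
  · simp
  have hb : 0 ≤ b := ha.trans hab
  have hdiff : b ^ n - a ^ n ≤ (b - a) * n * b ^ (n - 1) := by
    have h := (le_abs_self _).trans (abs_pow_sub_pow_le b a n)
    rwa [abs_of_nonneg (sub_nonneg.2 hab), abs_of_nonneg ha, abs_of_nonneg hb, max_eq_left hab] at h
  calc b * (b ^ n - a ^ n) ≤ b * ((b - a) * n * b ^ (n - 1)) :=
        mul_le_mul_of_nonneg_left hdiff hb
    _ = n * (b - a) * (b ^ (n - 1) * b) := by ring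
    _ = n * (b - a) * b ^ n := by rw [pow_sub_one_mul hn]

theorem mul_add_one_pow_sub_pow_le {a c x : R} (hx : 0 ≤ x) (hc : 0 ≤ c) (ha : a ≤ c * (x + 1))
    (n : ℕ) : a * ((x + 1) ^ n - x ^ n) ≤ c * n * (x + 1) ^ n := by
  have hx_le : x ≤ x + 1 := le_add_of_nonneg_right zero_le_one
  calc a * ((x + 1) ^ n - x ^ n) ≤ c * (x + 1) * ((x + 1) ^ n - x ^ n) :=
        mul_le_mul_of_nonneg_right ha (sub_nonneg.2 (by gcongr))
    _ = c * ((x + 1) * ((x + 1) ^ n - x ^ n)) := mul_assoc _ _ _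
    _ ≤ c * (n * (x + 1 - x) * (x + 1) ^ n) :=
        mul_le_mul_of_nonneg_left (mul_pow_sub_pow_le hx hx_le n) hc
    _ = c * n * (x + 1) ^ n := by ring

theorem add_one_pow_le_exp_div_mul_pow {x : ℝ} (hx : 0 < x) (n : ℕ) :
    (x + 1) ^ n ≤ Real.exp (n / x) * x ^ n := by
  have hbase : x + 1 ≤ Real.exp (1 / x) * x :=
    calc x + 1 = (1 / x + 1) * x := by field_simp; ring
      _ ≤ Real.exp (1 / x) * x := by gcongr; exact Real.add_one_le_exp _
  calc (x + 1) ^ n ≤ (Real.exp (1 / x) * x) ^ n := by gcongr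
    _ = Real.exp (n / x) * x ^ n := by rw [mul_pow, ← Real.exp_nat_mul, mul_one_div]

theorem add_one_pow_le_exp_one_mul_pow_add {x : ℝ} (hx : 0 ≤ x) (n : ℕ) :
    (x + 1) ^ n ≤ Real.exp 1 * x ^ n + (Real.exp 1 * n) ^ n := by
  obtain rfl | hn := Nat.eq_zero_or_pos n
  · simp [Real.exp_nonneg]
  have hn_one : (1 : ℝ) ≤ n := by exact_mod_cast hn
  obtain hxn | hnx := lt_or_ge x n
  · have hbase : x + 1 ≤ Real.exp 1 * n := by
      nlinarith [Real.add_one_le_exp (1 : ℝ)]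
    exact (pow_le_pow_left₀ (by positivity) hbase n).trans (le_add_of_nonneg_left (by positivity))
  · have hx_pos : 0 < x := by linarith
    calc (x + 1) ^ n ≤ Real.exp (n / x) * x ^ n := add_one_pow_le_exp_div_mul_pow hx_pos n
      _ ≤ Real.exp 1 * x ^ n := by gcongr; exact div_le_one_of_le₀ hnx hx
      _ ≤ Real.exp 1 * x ^ n + (Real.exp 1 * n) ^ n := le_add_of_nonneg_right (by positivity)

end ElementaryInequalities

/-- The right-hand side `k_{l-1} f_{l-1} - k_l f_{l+1}` of the quantum walk equation at site `l`,
for hopping rates `k` and amplitudes `f` taken at a fixed time. The case split implements the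
convention `k_{-1} = 0`. -/
def walkDrift (k f : ℕ → ℝ) (l : ℕ) : ℝ :=
  (if l = 0 then 0 else k (l - 1) * f (l - 1)) - k l * f (l + 1)

/-- The expectation `E[w(l)]` for the weights `P_l = f_l ^ 2` on `{0, …, N}`. The amplitudes need
not be normalized, so `weightedMass N 1 f` is the total mass. -/
def weightedMass (N : ℕ) (w f : ℕ → ℝ) : ℝ :=
  ∑ l ∈ range (N + 1), w l * f l ^ 2

section WeightedMass

variable (N : ℕ) {w : ℕ → ℝ} (f : ℕ → ℝ)

theorem weightedMass_nonneg (hw : 0 ≤ w) : 0 ≤ weightedMass N w f :=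
  sum_nonneg fun l _ => mul_nonneg (hw l) (sq_nonneg _)

theorem sum_edges_le_weightedMass_succ_add (hw : 0 ≤ w) :
    ∑ l ∈ range N, w (l + 1) * (f l ^ 2 + f (l + 1) ^ 2) ≤
      weightedMass N (fun l => w (l + 1)) f + weightedMass N w f := by
  simp only [mul_add, sum_add_distrib, weightedMass]
  refine add_le_add ?_ ?_
  · rw [sum_range_succ]
    exact le_add_of_nonneg_right (mul_nonneg (hw _) (sq_nonneg _))
  · rw [sum_range_succ' _ N]
    exact le_add_of_nonneg_right (mul_nonneg (hw _) (sq_nonneg _))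

theorem weightedMass_succ_pow_le (n : ℕ) :
    weightedMass N (fun l => ((l : ℝ) + 1) ^ n) f ≤
      Real.exp 1 * weightedMass N (fun l => (l : ℝ) ^ n) f +
        (Real.exp 1 * n) ^ n * weightedMass N 1 f := by
  simp only [weightedMass, mul_sum, ← sum_add_distrib, ← mul_assoc, ← add_mul, Pi.one_apply,
    mul_one]
  gcongr with l
  exact add_one_pow_le_exp_one_mul_pow_add l.cast_nonneg n

end WeightedMass

section Walk

theorem sum_mul_walkDrift (k f w : ℕ → ℝ) (N : ℕ) :
    ∑ l ∈ range (N + 1), w l * (2 * f l * walkDrift k f l) =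
      ∑ l ∈ range N, 2 * (k l * (f l * f (l + 1))) * (w (l + 1) - w l) -
        2 * w N * k N * f N * f (N + 1) := by
  induction N with
  | zero =>
    simp only [walkDrift, zero_add, sum_range_one, sum_range_zero, if_true]
    ring
  | succ N ih =>
    rw [sum_range_succ, ih, sum_range_succ]
    simp only [walkDrift, Nat.add_one_ne_zero, if_false, Nat.add_sub_cancel]
    ring

variable {N : ℕ} {k : ℕ → ℝ} {φ : ℕ → ℝ → ℝ} {t c : ℝ}

theorem deriv_weightedMass_eq_sum_edges (hkN : k N = 0)
    (hφ : ∀ l ≤ N, HasDerivAt (φ l) (walkDrift k (φ · t) l) t) (w : ℕ → ℝ) :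
    deriv (fun τ => weightedMass N w (φ · τ)) t =
      ∑ l ∈ range N, 2 * (k l * (φ l t * φ (l + 1) t)) * (w (l + 1) - w l) := by
  have hderiv : HasDerivAt (fun τ => weightedMass N w (φ · τ))
      (∑ l ∈ range (N + 1), w l * (2 * φ l t * walkDrift k (φ · t) l)) t := by
    refine HasDerivAt.fun_sum fun l hl => ?_
    simpa using ((hφ l (mem_range_succ_iff.1 hl)).fun_pow 2).const_mul (w l)
  simp [hderiv.deriv, sum_mul_walkDrift k (φ · t), hkN]

theorem deriv_weightedMass_le_sum_edges (hkN : k N = 0)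
    (hφ : ∀ l ≤ N, HasDerivAt (φ l) (walkDrift k (φ · t) l) t) {w : ℕ → ℝ} (hw : Monotone w) :
    deriv (fun τ => weightedMass N w (φ · τ)) t ≤
      ∑ l ∈ range N, |k l| * (w (l + 1) - w l) * (φ l t ^ 2 + φ (l + 1) t ^ 2) := by
  rw [deriv_weightedMass_eq_sum_edges hkN hφ]
  refine sum_le_sum fun l _ => ?_
  rw [mul_right_comm |k l|]
  exact mul_le_mul_of_nonneg_right (two_mul_mul_mul_le_abs_mul_add_sq _ _ _)
    (sub_nonneg.2 (hw l.le_succ))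

theorem deriv_moment_le_weightedMass_succ_add (hkN : k N = 0)
    (hφ : ∀ l ≤ N, HasDerivAt (φ l) (walkDrift k (φ · t) l) t)
    (hc : 0 ≤ c) (hk : ∀ l < N, |k l| ≤ c * (l + 1)) (n : ℕ) :
    deriv (fun τ => weightedMass N (fun l => (l : ℝ) ^ n) (φ · τ)) t ≤
      c * n * (weightedMass N (fun l => ((l : ℝ) + 1) ^ n) (φ · t) +
        weightedMass N (fun l => (l : ℝ) ^ n) (φ · t)) := by
  have hmono : Monotone fun l : ℕ => (l : ℝ) ^ n := fun _ _ h => by dsimp only; gcongr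
  calc deriv (fun τ => weightedMass N (fun l => (l : ℝ) ^ n) (φ · τ)) t
      ≤ ∑ l ∈ range N, |k l| * (((l + 1 : ℕ) : ℝ) ^ n - (l : ℝ) ^ n) *
          (φ l t ^ 2 + φ (l + 1) t ^ 2) := deriv_weightedMass_le_sum_edges hkN hφ hmono
    _ ≤ ∑ l ∈ range N, c * n * ((l + 1 : ℕ) : ℝ) ^ n * (φ l t ^ 2 + φ (l + 1) t ^ 2) :=
        sum_le_sum fun l hl => mul_le_mul_of_nonneg_right
          (by simpa only [Nat.cast_add_one] using
            mul_add_one_pow_sub_pow_le l.cast_nonneg hc (hk l (mem_range.1 hl)) n)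
          (by positivity)
    _ = c * n * ∑ l ∈ range N, ((l + 1 : ℕ) : ℝ) ^ n * (φ l t ^ 2 + φ (l + 1) t ^ 2) := by
        simp only [mul_sum, mul_assoc]
    _ ≤ c * n * (weightedMass N (fun l => ((l : ℝ) + 1) ^ n) (φ · t) +
          weightedMass N (fun l => (l : ℝ) ^ n) (φ · t)) := by
        gcongr
        simpa only [Nat.cast_add_one] using sum_edges_le_weightedMass_succ_add N (φ · t)
          (w := fun l => (l : ℝ) ^ n) fun l => by positivity

theorem deriv_moment_le_exp_one_mul_add (hkN : k N = 0)
    (hφ : ∀ l ≤ N, HasDerivAt (φ l) (walkDrift k (φ · t) l) t)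
    (hc : 0 ≤ c) (hk : ∀ l < N, |k l| ≤ c * (l + 1)) (n : ℕ) :
    deriv (fun τ => weightedMass N (fun l => (l : ℝ) ^ n) (φ · τ)) t ≤
      c * n * ((1 + Real.exp 1) * weightedMass N (fun l => (l : ℝ) ^ n) (φ · t) +
        (Real.exp 1 * n) ^ n * weightedMass N 1 (φ · t)) := by
  refine (deriv_moment_le_weightedMass_succ_add hkN hφ hc hk n).trans ?_
  refine mul_le_mul_of_nonneg_left ?_ (by positivity)
  linarith [weightedMass_succ_pow_le N (φ · t) n]

theorem moment_derivative_bound_general (hkN : k N = 0)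
    (hφ : ∀ l ≤ N, HasDerivAt (φ l) (walkDrift k (φ · t) l) t)
    (hc : 0 ≤ c) (hk : ∀ l < N, |k l| ≤ c * (l + 1)) :
    (∀ n : ℕ, deriv (fun τ => weightedMass N (fun l => (l : ℝ) ^ n) (φ · τ)) t ≤
      4 * c * n * (1 + Real.exp 1) * (weightedMass N (fun l => (l : ℝ) ^ n) (φ · t) +
        (Real.exp 1 * n) ^ n * weightedMass N 1 (φ · t))) ∧
    deriv (fun τ => weightedMass N (fun l => (l : ℝ)) (φ · τ)) t ≤
      c * (2 * weightedMass N (fun l => (l : ℝ)) (φ · t) + weightedMass N 1 (φ · t)) := by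
  refine ⟨fun n => (deriv_moment_le_exp_one_mul_add hkN hφ hc hk n).trans ?_, ?_⟩
  · set E := weightedMass N (fun l => (l : ℝ) ^ n) (φ · t)
    set M := weightedMass N 1 (φ · t)
    have hE : 0 ≤ E := weightedMass_nonneg N _ fun l => by positivity
    have hM : 0 ≤ M := weightedMass_nonneg N _ zero_le_one
    have htail : 0 ≤ (Real.exp 1 * n) ^ n * M := by positivity
    have hloss : (1 + Real.exp 1) * E + (Real.exp 1 * n) ^ n * M ≤
        4 * (1 + Real.exp 1) * (E + (Real.exp 1 * n) ^ n * M) := by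
      nlinarith [mul_nonneg (Real.exp_nonneg 1) hE, mul_nonneg (Real.exp_nonneg 1) htail]
    exact (mul_le_mul_of_nonneg_left hloss (by positivity)).trans_eq (by ring)
  · have hsucc : weightedMass N (fun l => (l : ℝ) + 1) (φ · t) =
        weightedMass N (fun l => (l : ℝ)) (φ · t) + weightedMass N 1 (φ · t) := by
      simp only [weightedMass, Pi.one_apply, add_mul, sum_add_distrib]
    have hfirst := deriv_moment_le_weightedMass_succ_add hkN hφ hc hk 1
    simp only [pow_one, Nat.cast_one, mul_one, hsucc] at hfirst
    linarith

end Walk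

/-- Moment growth: if `|K_l(t)| ≤ c(l+1)` for all `0 ≤ l ≤ N′−1`, then for every `n ≥ 1`,
`(d/dt) E_{s,t}[lⁿ] ≤ 4cn(1+e)(E_{s,t}[lⁿ] + (en)ⁿ)`, and for `n = 1` the stronger bound
`(d/dt) E_{s,t}[l] ≤ c(2 E_{s,t}[l] + 1)` holds. -/
theorem moment_derivative_bound (N' : ℕ) (hN' : 0 < N') (K : ℕ → ℝ → ℝ) (φ : ℕ → ℝ → ℝ)
    (hKcont : ∀ l, Continuous (K l))
    (hKtop : ∀ t : ℝ, K N' t = 0)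
    (hODE : ∀ l ≤ N', ∀ t : ℝ, HasDerivAt (φ l)
      ((if l = 0 then 0 else K (l - 1) t * φ (l - 1) t) - K l t * φ (l + 1) t) t)
    (hinit0 : φ 0 0 = 1) (hinit : ∀ l, 0 < l → φ l 0 = 0)
    (hnorm : ∀ t : ℝ, ∑ l ∈ Finset.range (N' + 1), (φ l t) ^ 2 = 1)
    (c : ℝ) (hc : 0 < c)
    (hK : ∀ l < N', ∀ t : ℝ, |K l t| ≤ c * (l + 1)) :
    (∀ n : ℕ, 0 < n → ∀ t : ℝ,
      deriv (fun τ : ℝ => ∑ l ∈ Finset.range (N' + 1), (l : ℝ) ^ n * (φ l τ) ^ 2) t ≤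
        4 * c * n * (1 + Real.exp 1) *
          ((∑ l ∈ Finset.range (N' + 1), (l : ℝ) ^ n * (φ l t) ^ 2) + (Real.exp 1 * n) ^ n)) ∧
    (∀ t : ℝ,
      deriv (fun τ : ℝ => ∑ l ∈ Finset.range (N' + 1), (l : ℝ) * (φ l τ) ^ 2) t ≤
        c * (2 * (∑ l ∈ Finset.range (N' + 1), (l : ℝ) * (φ l t) ^ 2) + 1)) := by
  have hbound := fun t =>
    moment_derivative_bound_general (hKtop t) (hODE · · t) hc.le (hK · · t)
  exact ⟨fun n _ t => by simpa [weightedMass, hnorm t] using (hbound t).1 n,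
    fun t => by simpa [weightedMass, hnorm t] using (hbound t).2⟩
end

section
/- Suppose additionally that c > 0 and |K_l(t)| ≤ c(l+1) for all 0 ≤ l ≤ N′−1 and all t. Then for every positive integer n and every t ≥ 0, the n-th moment of the block-size distribution satisfies E_{s,t}[lⁿ] ≤ (en)ⁿ·( e^{4c(1+e)nt} − 1 ). -/
/-!
Summation by parts turns the walk equations into
`d/dt ∑ f(l) φ_l² = 2 ∑ (f(l+1) - f(l)) K_l φ_l φ_{l+1}`. With `f = 1` this is conservation of the
total mass `m`. With `f(l) = lⁿ`, the estimate `(l+1) ((l+1)ⁿ - lⁿ) ≤ n (l+1)ⁿ` absorbs the linear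
growth of `K_l`, and `(l+1)ⁿ ≤ e lⁿ + nⁿ` brings the shifted moment back to the `n`-th moment `M`
itself. The outcome `M' ≤ c n ((1 + e) M + nⁿ m)` is integrated by Grönwall's inequality.
-/

section Inequalities

open Real

theorem mul_pow_sub_pow_le_s10 {x y : ℝ} (hy : 0 ≤ y) (hyx : y ≤ x) (n : ℕ) :
    x * (x ^ n - y ^ n) ≤ n * x ^ n * (x - y) := by
  have hx : 0 ≤ x := hy.trans hyx
  rcases eq_or_ne n 0 with rfl | hn
  · simp
  have pow_sub_pow_le : x ^ n - y ^ n ≤ (x - y) * n * x ^ (n - 1) := by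
    simpa only [abs_of_nonneg hx, abs_of_nonneg hy, abs_of_nonneg (sub_nonneg.2 hyx),
      max_eq_left hyx] using (le_abs_self _).trans (abs_pow_sub_pow_le x y n)
  calc x * (x ^ n - y ^ n) ≤ x * ((x - y) * n * x ^ (n - 1)) := by gcongr
    _ = n * (x ^ (n - 1) * x) * (x - y) := by ring
    _ = n * x ^ n * (x - y) := by rw [pow_sub_one_mul hn]

theorem add_one_pow_le_exp_one_mul_pow {l n : ℕ} (hnl : n ≤ l) :
    ((l : ℝ) + 1) ^ n ≤ exp 1 * (l : ℝ) ^ n := by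
  rcases l.eq_zero_or_pos with rfl | hl
  · simp [Nat.le_zero.1 hnl]
  have one_le : (1 : ℝ) ≤ 1 + (l : ℝ)⁻¹ := le_add_of_nonneg_right (by positivity)
  calc ((l : ℝ) + 1) ^ n = (1 + (l : ℝ)⁻¹) ^ n * (l : ℝ) ^ n := by
        rw [← mul_pow]; field_simp
    _ ≤ (1 + (l : ℝ)⁻¹) ^ l * (l : ℝ) ^ n := by gcongr
    _ ≤ exp 1 * (l : ℝ) ^ n := by gcongr; exact one_add_inv_pow_le_exp

theorem add_one_pow_le_exp_one_mul_pow_add_pow (l n : ℕ) :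
    ((l : ℝ) + 1) ^ n ≤ exp 1 * (l : ℝ) ^ n + (n : ℝ) ^ n := by
  rcases lt_or_ge l n with hln | hnl
  · have : ((l : ℝ) + 1) ^ n ≤ (n : ℝ) ^ n := by gcongr; exact_mod_cast hln
    exact this.trans (le_add_of_nonneg_left (by positivity))
  · exact (add_one_pow_le_exp_one_mul_pow hnl).trans (le_add_of_nonneg_right (by positivity))

theorem two_mul_mul_mul_le_mul_sq_add_sq {k C : ℝ} (hk : |k| ≤ C) (a b : ℝ) :
    2 * (k * (a * b)) ≤ C * (a ^ 2 + b ^ 2) :=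
  calc 2 * (k * (a * b)) ≤ |2 * (k * (a * b))| := le_abs_self _
    _ = |k| * (2 * |a| * |b|) := by rw [abs_mul, abs_mul, abs_mul, abs_two]; ring
    _ ≤ C * (|a| ^ 2 + |b| ^ 2) := by
        gcongr
        · exact (abs_nonneg k).trans hk
        · exact two_mul_le_add_sq _ _
    _ = C * (a ^ 2 + b ^ 2) := by rw [sq_abs, sq_abs]

theorem pow_div_mul_exp_sub_one_le {c t : ℝ} (hc : 0 ≤ c) (ht : 0 ≤ t) (n : ℕ) :
    (n : ℝ) ^ n / (1 + exp 1) * (exp (c * (1 + exp 1) * n * t) - 1) ≤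
      (exp 1 * n) ^ n * (exp (4 * c * (1 + exp 1) * n * t) - 1) := by
  have one_le_exp_one : 1 ≤ exp 1 := one_le_exp zero_le_one
  have prefactor_le : (n : ℝ) ^ n / (1 + exp 1) ≤ (exp 1 * n) ^ n :=
    calc (n : ℝ) ^ n / (1 + exp 1) ≤ (n : ℝ) ^ n := div_le_self (by positivity) (by linarith)
      _ ≤ (exp 1 * n) ^ n := by gcongr; exact le_mul_of_one_le_left n.cast_nonneg one_le_exp_one
  have exp_sub_one_nonneg : 0 ≤ exp (c * (1 + exp 1) * n * t) - 1 :=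
    sub_nonneg.2 (one_le_exp (by positivity))
  gcongr
  linarith

theorem le_mul_exp_of_hasDerivAt_le_mul {f f' : ℝ → ℝ} {k : ℝ}
    (hf : ∀ s, HasDerivAt f (f' s) s) (hf' : ∀ s, f' s ≤ k * f s) {t : ℝ} (ht : 0 ≤ t) :
    f t ≤ f 0 * exp (k * t) := by
  have continuous_f : Continuous f := continuous_iff_continuousAt.2 fun s ↦ (hf s).continuousAt
  have f_le_gronwallBound : f t ≤ gronwallBound (f 0) k 0 (t - 0) :=
    le_gronwallBound_of_liminf_deriv_right_le continuous_f.continuousOn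
      (fun s _ _ ↦ (hf s).hasDerivWithinAt.liminf_right_slope_le) le_rfl
      (fun s _ ↦ by simpa only [add_zero] using hf' s) t ⟨ht, le_rfl⟩
  rwa [gronwallBound_ε0, sub_zero] at f_le_gronwallBound

end Inequalities

section LevelMoment

open Finset Real

/-- The `n`-th moment of the level `l ∈ {0, …, N}` when level `l` has weight `a l ^ 2`. The
amplitudes `a` need not be normalised: the total mass is the moment of order `0`
(where `0 ^ 0 = 1`). -/
def levelMoment (N : ℕ) (a : ℕ → ℝ) (n : ℕ) : ℝ :=
  ∑ l ∈ range (N + 1), (l : ℝ) ^ n * a l ^ 2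

theorem levelMoment_zero_right (N : ℕ) (a : ℕ → ℝ) :
    levelMoment N a 0 = ∑ l ∈ range (N + 1), a l ^ 2 := by
  simp only [levelMoment, pow_zero, one_mul]

theorem levelMoment_eq_zero_of_forall_pos {a : ℕ → ℝ} (ha : ∀ l, 0 < l → a l = 0) (N : ℕ) {n : ℕ}
    (hn : n ≠ 0) : levelMoment N a n = 0 := by
  refine sum_eq_zero fun l _ ↦ ?_
  rcases l.eq_zero_or_pos with rfl | hl
  · simp [hn]
  · simp [ha l hl]

theorem sum_add_one_pow_mul_sq_le (N : ℕ) (a : ℕ → ℝ) (n : ℕ) :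
    ∑ l ∈ range N, ((l : ℝ) + 1) ^ n * a l ^ 2 ≤
      exp 1 * levelMoment N a n + (n : ℝ) ^ n * levelMoment N a 0 :=
  calc ∑ l ∈ range N, ((l : ℝ) + 1) ^ n * a l ^ 2
      ≤ ∑ l ∈ range (N + 1), ((l : ℝ) + 1) ^ n * a l ^ 2 := by
        rw [sum_range_succ]; exact le_add_of_nonneg_right (by positivity)
    _ ≤ ∑ l ∈ range (N + 1), (exp 1 * (l : ℝ) ^ n + (n : ℝ) ^ n) * a l ^ 2 := by
        gcongr with l; exact add_one_pow_le_exp_one_mul_pow_add_pow l n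
    _ = exp 1 * levelMoment N a n + (n : ℝ) ^ n * levelMoment N a 0 := by
        simp only [levelMoment, add_mul, sum_add_distrib, mul_sum, mul_assoc, pow_zero, one_mul]

theorem sum_add_one_pow_mul_sq_succ_le (N : ℕ) (a : ℕ → ℝ) (n : ℕ) :
    ∑ l ∈ range N, ((l : ℝ) + 1) ^ n * a (l + 1) ^ 2 ≤ levelMoment N a n := by
  rw [levelMoment, sum_range_succ']
  push_cast
  exact le_add_of_nonneg_right (by positivity)

theorem two_mul_pow_sub_pow_mul_le {k c : ℝ} {l : ℕ} (hk : |k| ≤ c * (l + 1)) (n : ℕ) (a b : ℝ) :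
    2 * ((((l : ℝ) + 1) ^ n - (l : ℝ) ^ n) * k * (a * b)) ≤
      c * n * (((l : ℝ) + 1) ^ n * a ^ 2 + ((l : ℝ) + 1) ^ n * b ^ 2) := by
  have c_nonneg : 0 ≤ c := nonneg_of_mul_nonneg_left ((abs_nonneg k).trans hk) (by positivity)
  have increment_nonneg : 0 ≤ ((l : ℝ) + 1) ^ n - (l : ℝ) ^ n :=
    sub_nonneg.2 (by gcongr; linarith)
  have increment_le :
      ((l : ℝ) + 1) * (((l : ℝ) + 1) ^ n - (l : ℝ) ^ n) ≤ n * ((l : ℝ) + 1) ^ n := by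
    simpa using mul_pow_sub_pow_le_s10 l.cast_nonneg (le_add_of_nonneg_right zero_le_one) n
  have coupling_le : |(((l : ℝ) + 1) ^ n - (l : ℝ) ^ n) * k| ≤ c * (n * ((l : ℝ) + 1) ^ n) :=
    calc |(((l : ℝ) + 1) ^ n - (l : ℝ) ^ n) * k|
        = (((l : ℝ) + 1) ^ n - (l : ℝ) ^ n) * |k| := by rw [abs_mul, abs_of_nonneg increment_nonneg]
      _ ≤ (((l : ℝ) + 1) ^ n - (l : ℝ) ^ n) * (c * (l + 1)) := by gcongr
      _ = c * ((l + 1) * (((l : ℝ) + 1) ^ n - (l : ℝ) ^ n)) := by ring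
      _ ≤ c * (n * ((l : ℝ) + 1) ^ n) := by gcongr
  exact (two_mul_mul_mul_le_mul_sq_add_sq coupling_le a b).trans_eq (by ring)

theorem sum_pow_sub_pow_mul_le {N : ℕ} {k : ℕ → ℝ} {c : ℝ} (hc : 0 ≤ c)
    (hk : ∀ l < N, |k l| ≤ c * (l + 1)) (a : ℕ → ℝ) (n : ℕ) :
    ∑ l ∈ range N, 2 * ((((l + 1 : ℕ) : ℝ) ^ n - (l : ℝ) ^ n) * k l * (a l * a (l + 1))) ≤
      c * n * ((1 + exp 1) * levelMoment N a n + (n : ℝ) ^ n * levelMoment N a 0) :=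
  calc ∑ l ∈ range N, 2 * ((((l + 1 : ℕ) : ℝ) ^ n - (l : ℝ) ^ n) * k l * (a l * a (l + 1)))
      ≤ ∑ l ∈ range N,
          c * n * (((l : ℝ) + 1) ^ n * a l ^ 2 + ((l : ℝ) + 1) ^ n * a (l + 1) ^ 2) := by
        push_cast
        exact sum_le_sum fun l hl ↦ two_mul_pow_sub_pow_mul_le (hk l (mem_range.1 hl)) n _ _
    _ = c * n * (∑ l ∈ range N, ((l : ℝ) + 1) ^ n * a l ^ 2 +
          ∑ l ∈ range N, ((l : ℝ) + 1) ^ n * a (l + 1) ^ 2) := by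
        rw [← mul_sum, sum_add_distrib]
    _ ≤ c * n * (exp 1 * levelMoment N a n + (n : ℝ) ^ n * levelMoment N a 0 +
          levelMoment N a n) := by
        gcongr
        · exact sum_add_one_pow_mul_sq_le N a n
        · exact sum_add_one_pow_mul_sq_succ_le N a n
    _ = c * n * ((1 + exp 1) * levelMoment N a n + (n : ℝ) ^ n * levelMoment N a 0) := by ring

end LevelMoment

section QuantumWalk

open Finset Real

theorem sum_mul_walk_eq_sum_sub_mul (f a k : ℕ → ℝ) (N : ℕ) :
    ∑ l ∈ range (N + 1),
        f l * (2 * a l * ((if l = 0 then 0 else k (l - 1) * a (l - 1)) - k l * a (l + 1))) =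
      ∑ l ∈ range N, 2 * ((f (l + 1) - f l) * k l * (a l * a (l + 1))) -
        2 * f N * k N * (a N * a (N + 1)) := by
  induction N with
  | zero =>
    simp only [zero_add, sum_range_one, range_zero, sum_empty, if_true]
    ring
  | succ N ih =>
    rw [sum_range_succ, ih, sum_range_succ _ N, if_neg N.succ_ne_zero, Nat.add_sub_cancel]
    ring

/-- The amplitudes `φ 0, …, φ N` solve the continuous-time quantum walk equations on the path
`0, …, N`, where `K l` couples the levels `l` and `l + 1`. The case distinction at `l = 0` and
`coupling_top` encode the boundary convention `K_{-1} = K_N = 0`; no initial condition is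
imposed. -/
structure IsQuantumWalk (N : ℕ) (K φ : ℕ → ℝ → ℝ) : Prop where
  coupling_top : ∀ t, K N t = 0
  hasDerivAt : ∀ l ≤ N, ∀ t, HasDerivAt (φ l)
    ((if l = 0 then 0 else K (l - 1) t * φ (l - 1) t) - K l t * φ (l + 1) t) t

namespace IsQuantumWalk

variable {N : ℕ} {K φ : ℕ → ℝ → ℝ}

theorem hasDerivAt_sum_mul_sq (h : IsQuantumWalk N K φ) (f : ℕ → ℝ) (t : ℝ) :
    HasDerivAt (fun s ↦ ∑ l ∈ range (N + 1), f l * φ l s ^ 2)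
      (∑ l ∈ range N, 2 * ((f (l + 1) - f l) * K l t * (φ l t * φ (l + 1) t))) t := by
  have by_parts := sum_mul_walk_eq_sum_sub_mul f (φ · t) (K · t) N
  simp only [h.coupling_top t, mul_zero, zero_mul, sub_zero] at by_parts
  rw [← by_parts]
  refine HasDerivAt.fun_sum fun l hl ↦ ?_
  simpa using ((h.hasDerivAt l (mem_range_succ_iff.1 hl) t).pow 2).const_mul (f l)

theorem hasDerivAt_levelMoment (h : IsQuantumWalk N K φ) (n : ℕ) (t : ℝ) :
    HasDerivAt (fun s ↦ levelMoment N (φ · s) n)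
      (∑ l ∈ range N,
        2 * ((((l + 1 : ℕ) : ℝ) ^ n - (l : ℝ) ^ n) * K l t * (φ l t * φ (l + 1) t))) t :=
  h.hasDerivAt_sum_mul_sq (fun l ↦ (l : ℝ) ^ n) t

theorem levelMoment_zero_eq (h : IsQuantumWalk N K φ) (s t : ℝ) :
    levelMoment N (φ · s) 0 = levelMoment N (φ · t) 0 := by
  have hasDerivAt_zero (r : ℝ) : HasDerivAt (fun s ↦ levelMoment N (φ · s) 0) 0 r := by
    simpa using h.hasDerivAt_levelMoment 0 r
  exact is_const_of_deriv_eq_zero (fun r ↦ (hasDerivAt_zero r).differentiableAt)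
    (fun r ↦ (hasDerivAt_zero r).deriv) s t

end IsQuantumWalk

theorem moment_bound_general {N : ℕ} {K φ : ℕ → ℝ → ℝ} (h : IsQuantumWalk N K φ) {c : ℝ}
    (hc : 0 ≤ c) (hK : ∀ l < N, ∀ t, |K l t| ≤ c * (l + 1)) (n : ℕ) {t : ℝ} (ht : 0 ≤ t) :
    levelMoment N (φ · t) n ≤
      levelMoment N (φ · 0) n * exp (c * (1 + exp 1) * n * t) +
        (n : ℝ) ^ n / (1 + exp 1) * levelMoment N (φ · 0) 0 *
          (exp (c * (1 + exp 1) * n * t) - 1) := by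
  -- Adding the constant `B` makes the differential inequality for the moment homogeneous.
  set B : ℝ := (n : ℝ) ^ n / (1 + exp 1) * levelMoment N (φ · 0) 0 with hB
  have deriv_le (s : ℝ) :
      ∑ l ∈ range N,
          2 * ((((l + 1 : ℕ) : ℝ) ^ n - (l : ℝ) ^ n) * K l s * (φ l s * φ (l + 1) s)) ≤
        c * (1 + exp 1) * n * (levelMoment N (φ · s) n + B) := by
    refine (sum_pow_sub_pow_mul_le hc (hK · · s) (φ · s) n).trans_eq ?_
    rw [h.levelMoment_zero_eq s 0, hB]
    field_simp
  have growth := le_mul_exp_of_hasDerivAt_le_mul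
    (fun s ↦ (h.hasDerivAt_levelMoment n s).add_const B) deriv_le ht
  linarith

end QuantumWalk

/-- Moment bound: if `|K_l(t)| ≤ c(l+1)` for all `0 ≤ l ≤ N′−1`, then for every `n ≥ 1` and
`t ≥ 0`, `E_{s,t}[lⁿ] ≤ (en)ⁿ (e^{4c(1+e)nt} − 1)`. -/
theorem moment_bound (N' : ℕ) (hN' : 0 < N') (K : ℕ → ℝ → ℝ) (φ : ℕ → ℝ → ℝ)
    (hKcont : ∀ l, Continuous (K l))
    (hKtop : ∀ t : ℝ, K N' t = 0)
    (hODE : ∀ l ≤ N', ∀ t : ℝ, HasDerivAt (φ l)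
      ((if l = 0 then 0 else K (l - 1) t * φ (l - 1) t) - K l t * φ (l + 1) t) t)
    (hinit0 : φ 0 0 = 1) (hinit : ∀ l, 0 < l → φ l 0 = 0)
    (hnorm : ∀ t : ℝ, ∑ l ∈ Finset.range (N' + 1), (φ l t) ^ 2 = 1)
    (c : ℝ) (hc : 0 < c)
    (hK : ∀ l < N', ∀ t : ℝ, |K l t| ≤ c * (l + 1)) :
    ∀ n : ℕ, 0 < n → ∀ t : ℝ, 0 ≤ t →
      ∑ l ∈ Finset.range (N' + 1), (l : ℝ) ^ n * (φ l t) ^ 2 ≤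
        (Real.exp 1 * n) ^ n * (Real.exp (4 * c * (1 + Real.exp 1) * n * t) - 1) := by
  intro n hn t ht
  have general := moment_bound_general ⟨hKtop, hODE⟩ hc.le hK n ht
  rw [levelMoment_eq_zero_of_forall_pos hinit N' hn.ne', levelMoment_zero_right, hnorm, zero_mul,
    zero_add, mul_one] at general
  exact general.trans (pow_div_mul_exp_sub_one_le hc.le ht n)
end

section
/- Suppose additionally that M is a positive integer with M < N′, c > 0, and |K_l(t)| ≤ c(l+1) for all l ≤ M and all t. Then for every t ≥ 0, the probability of the walk being beyond site M satisfies (d/dt) Σ_{l=M+1}^{N′} P_l(t) ≤ 2e·c²·(M+1)·t·exp( −M·e^{−2−4c(1+e)t} ). -/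
/-!
Give the mass at site `l` the weight `y ^ (2 l + 1)`, lumping all the mass beyond site `M` into
site `M + 1`. By AM-GM on each bond and `|K_l| ≤ c (l + 1)`, at fixed `y ≥ 1` the total weighted
mass `W(y, t)` satisfies `∂W/∂t ≤ c (y² - 1) ∂W/∂y`. Hence `W` does not increase along the
characteristics `y' = -c (y² - 1)`, that is `y(t) = coth (a + c t)`, and `W = y` at time `0`. This
bounds the amplitudes at sites `M` and `M + 1`, whose product controls the current between them;
the choice `a = c t` gives
`(d/dt) Σ_{l > M} P_l(t) ≤ 2 c (M + 1) tanh (2 c t) ^ (2 M + 2) / tanh (c t)`.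
-/

open Finset Real

section SummationIdentities

variable {R : Type*} [CommRing R]

lemma sum_range_mul_sub_succ_add_mul (w f : ℕ → R) (n : ℕ) :
    ∑ l ∈ range n, w l * (f l - f (l + 1)) + w n * f n =
      w 0 * f 0 + ∑ l ∈ range n, (w (l + 1) - w l) * f (l + 1) := by
  induction n with
  | zero => simp
  | succ n ih =>
    rw [sum_range_succ, sum_range_succ, ← add_assoc, ← ih]
    ring

lemma sum_range_succ_mul_add_succ (f : ℕ → R) (n : ℕ) :
    ∑ l ∈ range n, ((l : R) + 1) * (f l + f (l + 1)) =
      ∑ l ∈ range n, (2 * (l : R) + 1) * f l + n * f n := by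
  induction n with
  | zero => simp
  | succ n ih =>
    rw [sum_range_succ, sum_range_succ, ih]
    push_cast
    ring

end SummationIdentities

lemma eq_zero_of_sum_range_sq_le_one {f : ℕ → ℝ} {l n : ℕ} (hf : f 0 = 1)
    (hsum : ∑ k ∈ range n, f k ^ 2 ≤ 1) (hl : l ≠ 0) (hln : l < n) : f l = 0 := by
  have pair_le : f 0 ^ 2 + f l ^ 2 ≤ ∑ k ∈ range n, f k ^ 2 := by
    rw [← sum_pair (f := fun k => f k ^ 2) hl.symm]
    refine sum_le_sum_of_subset_of_nonneg ?_ fun _ _ _ => sq_nonneg _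
    simp only [insert_subset_iff, singleton_subset_iff, mem_range]
    omega
  rw [hf] at pair_le
  exact sq_eq_zero_iff.1 (le_antisymm (by linarith) (sq_nonneg _))

lemma exp_neg_two_le_one_div_four : exp (-2) ≤ 1 / 4 := by
  have two_le_exp_one : 2 ≤ exp 1 := by linarith [add_one_le_exp (1 : ℝ)]
  rw [show (-2 : ℝ) = -(1 + 1) by norm_num, exp_neg, exp_add, ← one_div]
  gcongr
  nlinarith

section Tanh

variable {x : ℝ}

lemma tanh_pos_of_pos (hx : 0 < x) : 0 < tanh x := by
  rw [tanh_eq_sinh_div_cosh]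
  exact div_pos (sinh_pos_iff.2 hx) (cosh_pos x)

lemma one_sub_tanh_sq (x : ℝ) : 1 - tanh x ^ 2 = (cosh x ^ 2)⁻¹ := by
  have cosh_ne_zero : cosh x ≠ 0 := (cosh_pos x).ne'
  rw [tanh_eq_sinh_div_cosh]
  field_simp
  linarith [cosh_sq x]

lemma hasDerivAt_tanh (x : ℝ) : HasDerivAt tanh (1 - tanh x ^ 2) x := by
  have tanh_eq_div : tanh = fun y => sinh y / cosh y := funext tanh_eq_sinh_div_cosh
  have cosh_ne_zero : cosh x ≠ 0 := (cosh_pos x).ne'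
  rw [tanh_eq_div]
  refine ((hasDerivAt_sinh x).fun_div (hasDerivAt_cosh x) cosh_ne_zero).congr_deriv ?_
  field_simp

lemma tanh_le_self (hx : 0 ≤ x) : tanh x ≤ x := by
  have sub_tanh_monotone : Monotone fun y => y - tanh y :=
    monotone_of_hasDerivAt_nonneg (fun y => (hasDerivAt_id y).fun_sub (hasDerivAt_tanh y))
      fun y => by simpa using sq_nonneg (tanh y)
  simpa using sub_tanh_monotone hx

lemma tanh_two_mul (x : ℝ) : tanh (2 * x) = 2 * tanh x / (1 + tanh x ^ 2) := by
  have cosh_ne_zero : cosh x ≠ 0 := (cosh_pos x).ne'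
  simp only [tanh_eq_sinh_div_cosh, sinh_two_mul, cosh_two_mul]
  field_simp

lemma tanh_sq_le_one_sub_exp (hx : 0 ≤ x) : tanh x ^ 2 ≤ 1 - exp (-2 * x) := by
  have cosh_le_exp : cosh x ≤ exp x := by
    linarith [cosh_add_sinh x, sinh_nonneg_iff.2 hx]
  have exp_le : exp (-2 * x) ≤ (cosh x ^ 2)⁻¹ := by
    rw [show -2 * x = -(2 * x) by ring, exp_neg, two_mul, exp_add, ← sq]
    gcongr
  linarith [one_sub_tanh_sq x]

-- `27/16` is the maximum of `16 v / (1 + v) ^ 4` over `v = tanh x ^ 2`, attained at `v = 1/3`.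
lemma tanh_two_mul_pow_four_le (x : ℝ) : tanh (2 * x) ^ 4 ≤ 27 / 16 * tanh x ^ 2 := by
  set v := tanh x
  have quartic_factor :
      (1 + v ^ 2) ^ 4 - 256 / 27 * v ^ 2 = (v ^ 2 - 1 / 3) ^ 2 * (v ^ 4 + 14 / 3 * v ^ 2 + 9) := by
    ring
  have le_quartic : 256 / 27 * v ^ 2 ≤ (1 + v ^ 2) ^ 4 :=
    sub_nonneg.1 (quartic_factor ▸ by positivity)
  rw [tanh_two_mul, div_pow, div_le_iff₀ (by positivity)]
  calc (2 * v) ^ 4 = 27 / 16 * v ^ 2 * (256 / 27 * v ^ 2) := by ring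
    _ ≤ 27 / 16 * v ^ 2 * (1 + v ^ 2) ^ 4 := by gcongr

lemma tanh_two_mul_pow_div_tanh_le {s r : ℝ} {M : ℕ} (hM : 0 < M) (hs : 0 < s)
    (hr : r ≤ 1 / 4) (hrs : r ≤ exp (-4 * s)) :
    tanh (2 * s) ^ (2 * M + 2) / tanh s ≤ exp 1 * s * exp (-M * r) := by
  obtain ⟨k, rfl⟩ : ∃ k, M = k + 1 := Nat.exists_eq_add_one.2 hM
  have tanh_pos := tanh_pos_of_pos hs
  have tanh_sq_le : tanh (2 * s) ^ 2 ≤ exp (-r) := by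
    have h := tanh_sq_le_one_sub_exp (x := 2 * s) (by positivity)
    rw [show -2 * (2 * s) = -4 * s by ring] at h
    linarith [add_one_le_exp (-r)]
  have le_exp : 27 / 16 ≤ exp (1 - r) := by linarith [add_one_le_exp (1 - r)]
  rw [div_le_iff₀ tanh_pos]
  calc tanh (2 * s) ^ (2 * (k + 1) + 2) = tanh (2 * s) ^ 4 * (tanh (2 * s) ^ 2) ^ k := by ring
    _ ≤ exp (1 - r) * tanh s ^ 2 * exp (-r) ^ k := by
      gcongr
      exact (tanh_two_mul_pow_four_le s).trans (by gcongr)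
    _ = exp 1 * tanh s * exp (-(k + 1 : ℕ) * r) * tanh s := by
      have exp_mul : exp (1 - r) * exp (-r) ^ k = exp 1 * exp (-(k + 1 : ℕ) * r) := by
        rw [← exp_nat_mul, ← exp_add, ← exp_add]
        push_cast
        ring_nf
      linear_combination tanh s ^ 2 * exp_mul
    _ ≤ exp 1 * s * exp (-(k + 1 : ℕ) * r) * tanh s := by
      gcongr
      exact tanh_le_self hs.le

end Tanh

namespace QuantumWalk

variable {K φ : ℕ → ℝ → ℝ} {l M : ℕ} {c t T y : ℝ}

/-- The equation of motion of the walk with couplings `K` and amplitudes `φ`, at site `l` and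
time `t`; the case distinction encodes `K_{-1} = 0`. -/
def EquationAt (K φ : ℕ → ℝ → ℝ) (l : ℕ) (t : ℝ) : Prop :=
  HasDerivAt (φ l) ((if l = 0 then 0 else K (l - 1) t * φ (l - 1) t) - K l t * φ (l + 1) t) t

/-- The probability current entering site `l` from site `l - 1`. -/
def inflow (K φ : ℕ → ℝ → ℝ) : ℕ → ℝ → ℝ
  | 0, _ => 0
  | l + 1, t => 2 * K l t * φ l t * φ (l + 1) t

/-- The probability `P_{l > M}` of being beyond site `M`, encoded as the complement of the
probability of the sites `0, …, M`, so that only those sites enter the equations of motion. -/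
def massBeyond (φ : ℕ → ℝ → ℝ) (M : ℕ) (t : ℝ) : ℝ :=
  1 - ∑ l ∈ range (M + 1), φ l t ^ 2

/-- The generating function `W(y, t)` of the site probabilities, in odd powers of `y`, with all the
mass beyond site `M` placed at site `M + 1`. -/
def weightedMass (φ : ℕ → ℝ → ℝ) (M : ℕ) (y t : ℝ) : ℝ :=
  ∑ l ∈ range (M + 1), y ^ (2 * l + 1) * φ l t ^ 2 + y ^ (2 * (M + 1) + 1) * massBeyond φ M t

/-- The partial derivative `∂W/∂y` of `weightedMass`. -/
def weightedMassSlope (φ : ℕ → ℝ → ℝ) (M : ℕ) (y t : ℝ) : ℝ :=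
  ∑ l ∈ range (M + 1), (2 * (l : ℝ) + 1) * (y ^ (2 * l) * φ l t ^ 2) +
    (2 * ((M : ℝ) + 1) + 1) * (y ^ (2 * (M + 1)) * massBeyond φ M t)

/-- The partial derivative `∂W/∂t` of `weightedMass` along the walk, as a sum over bonds: the
current across a bond raises the weight from `y ^ (2 l + 1)` to `y ^ (2 (l + 1) + 1)`. -/
def weightedInflow (K φ : ℕ → ℝ → ℝ) (M : ℕ) (y t : ℝ) : ℝ :=
  ∑ l ∈ range (M + 1), (y ^ (2 * (l + 1) + 1) - y ^ (2 * l + 1)) * inflow K φ (l + 1) t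

@[simp]
lemma inflow_zero (K φ : ℕ → ℝ → ℝ) (t : ℝ) : inflow K φ 0 t = 0 := rfl

lemma EquationAt.hasDerivAt_sq (h : EquationAt K φ l t) :
    HasDerivAt (fun τ => φ l τ ^ 2) (inflow K φ l t - inflow K φ (l + 1) t) t := by
  refine (h.fun_pow 2).congr_deriv ?_
  cases l <;> simp [inflow] <;> ring

lemma hasDerivAt_massBeyond (h : ∀ l ≤ M, EquationAt K φ l t) :
    HasDerivAt (massBeyond φ M) (inflow K φ (M + 1) t) t := by
  have hasDerivAt_sum := HasDerivAt.fun_sum fun l (hl : l ∈ range (M + 1)) =>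
    (h l (mem_range_succ_iff.1 hl)).hasDerivAt_sq
  refine (hasDerivAt_sum.const_sub 1).congr_deriv ?_
  rw [sum_range_sub' (fun l => inflow K φ l t), inflow_zero, zero_sub, neg_neg]

lemma hasDerivAt_weightedMass {y : ℝ → ℝ} {y' : ℝ} (h : ∀ l ≤ M, EquationAt K φ l t)
    (hy : HasDerivAt y y' t) :
    HasDerivAt (fun τ => weightedMass φ M (y τ) τ)
      (y' * weightedMassSlope φ M (y t) t + weightedInflow K φ M (y t) t) t := by
  have hasDerivAt_weight (l : ℕ) := hy.fun_pow (2 * l + 1)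
  have hasDerivAt_sites := HasDerivAt.fun_sum fun l (hl : l ∈ range (M + 1)) =>
    (hasDerivAt_weight l).fun_mul (h l (mem_range_succ_iff.1 hl)).hasDerivAt_sq
  have hasDerivAt_beyond := (hasDerivAt_weight (M + 1)).fun_mul (hasDerivAt_massBeyond h)
  refine (hasDerivAt_sites.fun_add hasDerivAt_beyond).congr_deriv ?_
  have inflow_by_parts := sum_range_mul_sub_succ_add_mul (fun l => y t ^ (2 * l + 1))
    (fun l => inflow K φ l t) (M + 1)
  have slope_sites : ∑ l ∈ range (M + 1), ((2 * l + 1 : ℕ) : ℝ) * y t ^ (2 * l) * y' * φ l t ^ 2 =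
      y' * ∑ l ∈ range (M + 1), (2 * (l : ℝ) + 1) * (y t ^ (2 * l) * φ l t ^ 2) := by
    rw [mul_sum]
    refine sum_congr rfl fun l _ => ?_
    push_cast
    ring
  simp only [inflow_zero, mul_zero, zero_add] at inflow_by_parts
  rw [sum_add_distrib, weightedMassSlope, weightedInflow]
  simp only [Nat.add_sub_cancel]
  push_cast at slope_sites ⊢
  linear_combination slope_sites + inflow_by_parts

lemma inflow_succ_mul_le (hK : |K l t| ≤ c * (l + 1)) (y : ℝ) :
    inflow K φ (l + 1) t * y ≤ c * (l + 1) * (φ l t ^ 2 + y ^ 2 * φ (l + 1) t ^ 2) :=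
  calc inflow K φ (l + 1) t * y = K l t * (2 * φ l t * (y * φ (l + 1) t)) := by
        simp only [inflow]
        ring
    _ ≤ |K l t| * (2 * |φ l t| * |y * φ (l + 1) t|) := by
      simpa only [abs_mul, abs_two] using le_abs_self (K l t * (2 * φ l t * (y * φ (l + 1) t)))
    _ ≤ c * (l + 1) * (φ l t ^ 2 + y ^ 2 * φ (l + 1) t ^ 2) := by
      refine mul_le_mul hK ?_ (by positivity) ((abs_nonneg _).trans hK)
      simpa only [sq_abs, mul_pow] using two_mul_le_add_sq |φ l t| |y * φ (l + 1) t|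

lemma sq_succ_le_massBeyond (h : ∑ l ∈ range (M + 2), φ l t ^ 2 ≤ 1) :
    φ (M + 1) t ^ 2 ≤ massBeyond φ M t := by
  rw [sum_range_succ] at h
  exact le_sub_iff_add_le'.2 h

lemma weightedInflow_le (hc : 0 ≤ c) (hy : 1 ≤ y)
    (hφ : ∑ l ∈ range (M + 2), φ l t ^ 2 ≤ 1) (hK : ∀ l ≤ M, |K l t| ≤ c * (l + 1)) :
    weightedInflow K φ M y t ≤ c * (y ^ 2 - 1) * weightedMassSlope φ M y t := by
  have y_sq_sub_one_nonneg : 0 ≤ y ^ 2 - 1 := sub_nonneg.2 (one_le_pow₀ hy)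
  have bond_le : ∀ l ∈ range (M + 1),
      (y ^ (2 * (l + 1) + 1) - y ^ (2 * l + 1)) * inflow K φ (l + 1) t ≤
        c * (y ^ 2 - 1) *
          ((l + 1) * (y ^ (2 * l) * φ l t ^ 2 + y ^ (2 * (l + 1)) * φ (l + 1) t ^ 2)) := by
    intro l hl
    calc (y ^ (2 * (l + 1) + 1) - y ^ (2 * l + 1)) * inflow K φ (l + 1) t
        = (y ^ 2 - 1) * y ^ (2 * l) * (inflow K φ (l + 1) t * y) := by ring
      _ ≤ (y ^ 2 - 1) * y ^ (2 * l) *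
            (c * (l + 1) * (φ l t ^ 2 + y ^ 2 * φ (l + 1) t ^ 2)) := by
          refine mul_le_mul_of_nonneg_left ?_ (by positivity)
          exact inflow_succ_mul_le (hK l (mem_range_succ_iff.1 hl)) y
      _ = _ := by ring
  have last_site_le : (M + 1) * (y ^ (2 * (M + 1)) * φ (M + 1) t ^ 2) ≤
      (2 * ((M : ℝ) + 1) + 1) * (y ^ (2 * (M + 1)) * massBeyond φ M t) := by
    gcongr
    · linarith
    · exact sq_succ_le_massBeyond hφ
  refine (sum_le_sum bond_le).trans ?_
  rw [← mul_sum, sum_range_succ_mul_add_succ fun l => y ^ (2 * l) * φ l t ^ 2]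
  push_cast
  unfold weightedMassSlope
  gcongr

lemma antitoneOn_weightedMass {y : ℝ → ℝ} (hc : 0 ≤ c)
    (hwalk : ∀ l ≤ M, ∀ τ ∈ Set.Icc 0 T, EquationAt K φ l τ)
    (hφ : ∀ τ ∈ Set.Icc 0 T, ∑ l ∈ range (M + 2), φ l τ ^ 2 ≤ 1)
    (hK : ∀ l ≤ M, ∀ τ ∈ Set.Icc 0 T, |K l τ| ≤ c * (l + 1))
    (hy : ∀ τ ∈ Set.Icc 0 T, 1 ≤ y τ)
    (hy' : ∀ τ ∈ Set.Icc 0 T, HasDerivAt y (-c * (y τ ^ 2 - 1)) τ) :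
    AntitoneOn (fun τ => weightedMass φ M (y τ) τ) (Set.Icc 0 T) := by
  have hasDerivAt_mass (τ : ℝ) (hτ : τ ∈ Set.Icc 0 T) :=
    hasDerivAt_weightedMass (fun l hl => hwalk l hl τ hτ) (hy' τ hτ)
  refine antitoneOn_of_hasDerivWithinAt_nonpos (convex_Icc 0 T)
    (fun τ hτ => (hasDerivAt_mass τ hτ).continuousAt.continuousWithinAt)
    (fun τ hτ => (hasDerivAt_mass τ (interior_subset hτ)).hasDerivWithinAt) fun τ hτ => ?_
  replace hτ := interior_subset hτ
  linarith [weightedInflow_le hc (hy τ hτ) (hφ τ hτ) fun l hl => hK l hl τ hτ]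

lemma weightedMass_of_localized (hinit : φ 0 t = 1)
    (hφ : ∑ l ∈ range (M + 2), φ l t ^ 2 ≤ 1) (y : ℝ) : weightedMass φ M y t = y := by
  have sum_sites_eq (w : ℕ → ℝ) : ∑ l ∈ range (M + 1), w l * φ l t ^ 2 = w 0 := by
    rw [sum_eq_single_of_mem 0 (by simp) fun l hl hl0 => ?_, hinit, one_pow, mul_one]
    rw [eq_zero_of_sum_range_sq_le_one (f := (φ · t)) hinit hφ hl0 (by grind)]
    ring
  have massBeyond_eq_zero : massBeyond φ M t = 0 := by
    simpa [massBeyond, sub_eq_zero] using (sum_sites_eq fun _ => 1).symm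
  simp [weightedMass, sum_sites_eq, massBeyond_eq_zero]

lemma pow_mul_sq_le_weightedMass (hy : 0 ≤ y) (hφ : ∑ l ∈ range (M + 2), φ l t ^ 2 ≤ 1)
    (hl : l < M + 2) : y ^ (2 * l + 1) * φ l t ^ 2 ≤ weightedMass φ M y t :=
  calc y ^ (2 * l + 1) * φ l t ^ 2
      ≤ ∑ k ∈ range (M + 2), y ^ (2 * k + 1) * φ k t ^ 2 :=
        single_le_sum (f := fun k => y ^ (2 * k + 1) * φ k t ^ 2)
          (fun _ _ => by positivity) (mem_range.2 hl)
    _ ≤ weightedMass φ M y t := by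
      rw [sum_range_succ, weightedMass]
      gcongr
      exact sq_succ_le_massBeyond hφ

lemma pow_mul_abs_mul_le_weightedMass (hy : 0 ≤ y) (hφ : ∑ l ∈ range (M + 2), φ l t ^ 2 ≤ 1) :
    y ^ (2 * M + 2) * |φ M t * φ (M + 1) t| ≤ weightedMass φ M y t := by
  have site_le := pow_mul_sq_le_weightedMass hy hφ (show M < M + 2 by omega)
  have succ_site_le := pow_mul_sq_le_weightedMass hy hφ (show M + 1 < M + 2 by omega)
  have weightedMass_nonneg : 0 ≤ weightedMass φ M y t := le_trans (by positivity) site_le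
  refine le_of_sq_le_sq ?_ weightedMass_nonneg
  calc (y ^ (2 * M + 2) * |φ M t * φ (M + 1) t|) ^ 2
      = y ^ (2 * M + 1) * φ M t ^ 2 * (y ^ (2 * (M + 1) + 1) * φ (M + 1) t ^ 2) := by
        rw [mul_pow, sq_abs]
        ring
    _ ≤ weightedMass φ M y t * weightedMass φ M y t := by gcongr
    _ = weightedMass φ M y t ^ 2 := (sq _).symm

lemma hasDerivAt_inv_tanh_affine {a : ℝ} (h : 0 < a + c * t) :
    HasDerivAt (fun τ => (tanh (a + c * τ))⁻¹) (-c * ((tanh (a + c * t))⁻¹ ^ 2 - 1)) t := by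
  have tanh_ne_zero : tanh (a + c * t) ≠ 0 := (tanh_pos_of_pos h).ne'
  have hasDerivAt_affine : HasDerivAt (fun τ => a + c * τ) c t := by
    simpa using ((hasDerivAt_id t).const_mul c).const_add a
  refine (((hasDerivAt_tanh _).comp t hasDerivAt_affine).fun_inv tanh_ne_zero).congr_deriv ?_
  simp only [Function.comp_apply]
  field_simp

lemma abs_mul_succ_le_tanh_pow_div_tanh {a : ℝ} (ha : 0 < a) (hc : 0 ≤ c) (hT : 0 ≤ T)
    (hwalk : ∀ l ≤ M, ∀ τ ∈ Set.Icc 0 T, EquationAt K φ l τ) (hinit : φ 0 0 = 1)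
    (hφ : ∀ τ ∈ Set.Icc 0 T, ∑ l ∈ range (M + 2), φ l τ ^ 2 ≤ 1)
    (hK : ∀ l ≤ M, ∀ τ ∈ Set.Icc 0 T, |K l τ| ≤ c * (l + 1)) :
    |φ M T * φ (M + 1) T| ≤ tanh (a + c * T) ^ (2 * M + 2) / tanh a := by
  have arg_pos : ∀ τ ∈ Set.Icc 0 T, 0 < a + c * τ := fun τ hτ =>
    add_pos_of_pos_of_nonneg ha (mul_nonneg hc hτ.1)
  have tanh_pos : 0 < tanh (a + c * T) := tanh_pos_of_pos (arg_pos T ⟨hT, le_rfl⟩)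
  have weightedMass_antitone := antitoneOn_weightedMass hc hwalk hφ hK
    (fun τ hτ => (one_le_inv₀ (tanh_pos_of_pos (arg_pos τ hτ))).2 (tanh_lt_one _).le)
    fun τ hτ => hasDerivAt_inv_tanh_affine (arg_pos τ hτ)
  have weighted_le : (tanh (a + c * T))⁻¹ ^ (2 * M + 2) * |φ M T * φ (M + 1) T| ≤ (tanh a)⁻¹ :=
    calc (tanh (a + c * T))⁻¹ ^ (2 * M + 2) * |φ M T * φ (M + 1) T|
        ≤ weightedMass φ M (tanh (a + c * T))⁻¹ T :=
          pow_mul_abs_mul_le_weightedMass (by positivity) (hφ T ⟨hT, le_rfl⟩)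
      _ ≤ weightedMass φ M (tanh (a + c * 0))⁻¹ 0 :=
          weightedMass_antitone ⟨le_rfl, hT⟩ ⟨hT, le_rfl⟩ hT
      _ = (tanh a)⁻¹ := by
          rw [weightedMass_of_localized hinit (hφ 0 ⟨le_rfl, hT⟩), mul_zero, add_zero]
  rwa [inv_pow, inv_mul_le_iff₀ (by positivity), ← div_eq_mul_inv] at weighted_le

lemma inflow_succ_le_tanh_pow_div_tanh {a : ℝ} (ha : 0 < a) (hc : 0 ≤ c) (hT : 0 ≤ T)
    (hwalk : ∀ l ≤ M, ∀ τ ∈ Set.Icc 0 T, EquationAt K φ l τ) (hinit : φ 0 0 = 1)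
    (hφ : ∀ τ ∈ Set.Icc 0 T, ∑ l ∈ range (M + 2), φ l τ ^ 2 ≤ 1)
    (hK : ∀ l ≤ M, ∀ τ ∈ Set.Icc 0 T, |K l τ| ≤ c * (l + 1)) :
    inflow K φ (M + 1) T ≤
      2 * c * (M + 1) * (tanh (a + c * T) ^ (2 * M + 2) / tanh a) :=
  calc inflow K φ (M + 1) T = 2 * (K M T * (φ M T * φ (M + 1) T)) := by
        simp only [inflow]
        ring
    _ ≤ 2 * (|K M T| * |φ M T * φ (M + 1) T|) := by
        rw [← abs_mul]
        gcongr
        exact le_abs_self _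
    _ ≤ 2 * (c * (M + 1) * (tanh (a + c * T) ^ (2 * M + 2) / tanh a)) := by
        gcongr
        · exact hK M le_rfl T ⟨hT, le_rfl⟩
        · exact abs_mul_succ_le_tanh_pow_div_tanh ha hc hT hwalk hinit hφ hK
    _ = 2 * c * (M + 1) * (tanh (a + c * T) ^ (2 * M + 2) / tanh a) := by ring

lemma inflow_succ_le_exp (hM : 0 < M) (hc : 0 < c) (hT : 0 ≤ T)
    (hwalk : ∀ l ≤ M, ∀ τ ∈ Set.Icc 0 T, EquationAt K φ l τ) (hinit : φ 0 0 = 1)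
    (hφ : ∀ τ ∈ Set.Icc 0 T, ∑ l ∈ range (M + 2), φ l τ ^ 2 ≤ 1)
    (hK : ∀ l ≤ M, ∀ τ ∈ Set.Icc 0 T, |K l τ| ≤ c * (l + 1))
    {r : ℝ} (hr : r ≤ 1 / 4) (hrT : r ≤ exp (-4 * (c * T))) :
    inflow K φ (M + 1) T ≤ 2 * exp 1 * c ^ 2 * (M + 1) * T * exp (-M * r) := by
  obtain rfl | hT_pos := hT.eq_or_lt
  · have amplitude_eq_zero : φ (M + 1) 0 = 0 :=
      eq_zero_of_sum_range_sq_le_one (f := (φ · 0)) hinit (hφ 0 ⟨le_rfl, le_rfl⟩)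
        M.succ_ne_zero (Nat.lt_succ_self _)
    simp [inflow, amplitude_eq_zero]
  have cT_pos : 0 < c * T := mul_pos hc hT_pos
  calc inflow K φ (M + 1) T
      ≤ 2 * c * (M + 1) * (tanh (c * T + c * T) ^ (2 * M + 2) / tanh (c * T)) :=
        inflow_succ_le_tanh_pow_div_tanh cT_pos hc.le hT hwalk hinit hφ hK
    _ ≤ 2 * c * (M + 1) * (exp 1 * (c * T) * exp (-M * r)) := by
        rw [← two_mul]
        gcongr
        exact tanh_two_mul_pow_div_tanh_le hM cT_pos hr hrT
    _ = 2 * exp 1 * c ^ 2 * (M + 1) * T * exp (-M * r) := by ring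

lemma sum_Icc_eq_massBeyond {N : ℕ} (hMN : M ≤ N)
    (hnorm : ∑ l ∈ range (N + 1), φ l t ^ 2 = 1) :
    ∑ l ∈ Icc (M + 1) N, φ l t ^ 2 = massBeyond φ M t := by
  rw [massBeyond, ← hnorm, ← Ico_add_one_right_eq_Icc,
    ← sum_range_add_sum_Ico _ (show M + 1 ≤ N + 1 by omega), add_sub_cancel_left]

end QuantumWalk

open QuantumWalk in
theorem tail_probability_derivative_bound_general {N' : ℕ} {K φ : ℕ → ℝ → ℝ} {M : ℕ} {c t : ℝ}
    (hMpos : 0 < M) (hMN : M < N') (hc : 0 < c) (ht : 0 ≤ t)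
    (hwalk : ∀ l ≤ M, ∀ τ ∈ Set.Icc 0 t, EquationAt K φ l τ)
    (hinit0 : φ 0 0 = 1)
    (hnorm : ∀ τ, ∑ l ∈ range (N' + 1), φ l τ ^ 2 = 1)
    (hK : ∀ l ≤ M, ∀ τ ∈ Set.Icc 0 t, |K l τ| ≤ c * (l + 1)) :
    deriv (fun τ => ∑ l ∈ Icc (M + 1) N', φ l τ ^ 2) t ≤
      2 * exp 1 * c ^ 2 * (M + 1) * t * exp (-M * exp (-2 - 4 * c * (1 + exp 1) * t)) := by
  have partial_sum_le_one (τ : ℝ) : ∑ l ∈ range (M + 2), φ l τ ^ 2 ≤ 1 :=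
    hnorm τ ▸ sum_le_sum_of_subset_of_nonneg (range_mono (by omega)) fun _ _ _ => sq_nonneg _
  have deriv_tail_eq : deriv (fun τ => ∑ l ∈ Icc (M + 1) N', φ l τ ^ 2) t =
      inflow K φ (M + 1) t := by
    simp only [fun τ => sum_Icc_eq_massBeyond hMN.le (hnorm τ)]
    exact (hasDerivAt_massBeyond fun l hl => hwalk l hl t ⟨ht, le_rfl⟩).deriv
  have rate_nonneg : 0 ≤ c * t := by positivity
  have exp_rate_nonneg : 0 ≤ c * t * exp 1 := by positivity
  rw [deriv_tail_eq]
  refine inflow_succ_le_exp hMpos hc ht hwalk hinit0 (fun τ _ => partial_sum_le_one τ) hK ?_ ?_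
  · exact (exp_le_exp.2 (by linarith)).trans exp_neg_two_le_one_div_four
  · exact exp_le_exp.2 (by linarith)

/-- Escape-probability bound: if `|K_l(t)| ≤ c(l+1)` for `l ≤ M < N′`, then for `t ≥ 0`
`(d/dt) Σ_{l=M+1}^{N′} P_l(t) ≤ 2ec²(M+1)t·exp(−M e^{−2−4c(1+e)t})`. -/
theorem tail_probability_derivative_bound (N' : ℕ) (hN' : 0 < N')
    (K : ℕ → ℝ → ℝ) (φ : ℕ → ℝ → ℝ)
    (hKcont : ∀ l, Continuous (K l))
    (hKtop : ∀ t : ℝ, K N' t = 0)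
    (hODE : ∀ l ≤ N', ∀ t : ℝ, HasDerivAt (φ l)
      ((if l = 0 then 0 else K (l - 1) t * φ (l - 1) t) - K l t * φ (l + 1) t) t)
    (hinit0 : φ 0 0 = 1) (hinit : ∀ l, 0 < l → φ l 0 = 0)
    (hnorm : ∀ t : ℝ, ∑ l ∈ Finset.range (N' + 1), (φ l t) ^ 2 = 1)
    (M : ℕ) (hMpos : 0 < M) (hMN : M < N') (c : ℝ) (hc : 0 < c)
    (hK : ∀ l ≤ M, ∀ t : ℝ, |K l t| ≤ c * (l + 1)) :
    ∀ t : ℝ, 0 ≤ t →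
      deriv (fun τ : ℝ => ∑ l ∈ Finset.Icc (M + 1) N', (φ l τ) ^ 2) t ≤
        2 * Real.exp 1 * c ^ 2 * (M + 1) * t *
          Real.exp (-(M : ℝ) * Real.exp (-2 - 4 * c * (1 + Real.exp 1) * t)) := by
  exact fun t ht => tail_probability_derivative_bound_general hMpos hMN hc ht
    (fun l hl τ _ => hODE l (hl.trans hMN.le) τ) hinit0 hnorm fun l hl τ _ => hK l hl τ
end

section
/- Fix c > 0, α ∈ (0,1), κ ∈ (0,1), and an even integer q ≥ 4, and set b := α/(8c(1+e)). Then there exists a positive integer N₀ (depending only on c, α, κ, q) such that for every integer N > N₀ the following holds: for every continuous-time quantum walk as in the context with N′ := ⌈(N−1)/(q−2)⌉ and with |K_l(t)| ≤ c(l+1) for all l ≤ M := ⌊N^α⌋ (assuming M ≤ N′) and all t, one has E_{s,t}[l] < κ·N′ for all 0 ≤ t ≤ b·log N; consequently the scrambling time t_{s,κ} := inf{ t > 0 : E_{s,t}[l] ≥ κ·N′ } satisfies t_{s,κ} ≥ b·log N. -/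
/-- `N′ := ⌈(N−1)/(q−2)⌉`. -/
def Nprime (N q : ℕ) : ℕ := (N + q - 4) / (q - 2)

/-!
Instead of the mean position `E[l]`, one follows the expectation of the truncated weight
`f l = 2 min(l, M) + 1`. Only the rates `K_l` with `l < M` enter its time derivative, and by AM-GM
each contributes at most `2c(l+1)(P_l + P_{l+1})`; the coefficient of `P_l` in the sum is at most
`2c(l+1) + 2cl = 2c f l`. Grönwall's inequality gives `E[f] ≤ exp(2ct)`. On `{0, …, n}` one has
`M l ≤ n min(l, M)`, so `2M E[l] ≤ n exp(2ct)`. For `t ≤ b log N` with `2cb < α` the exponential is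
at most `N ^ (2cb)`, which is negligible compared with `M = ⌊N ^ α⌋`.
-/

open Filter Finset

lemma sum_mul_two_mul_hopping_eq (n : ℕ) (f k p : ℕ → ℝ) :
    ∑ l ∈ range (n + 1), f l * (2 * p l *
        ((if l = 0 then 0 else k (l - 1) * p (l - 1)) - k l * p (l + 1))) =
      ∑ l ∈ range n, 2 * (f (l + 1) - f l) * (k l * (p l * p (l + 1))) -
        2 * f n * (k n * (p n * p (n + 1))) := by
  induction n with
  | zero =>
    simp only [zero_add, sum_range_one, range_zero, sum_empty, if_true]
    ring
  | succ n ih =>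
    rw [sum_range_succ, ih, sum_range_succ]
    simp only [Nat.add_one_ne_zero, if_false, Nat.add_sub_cancel]
    ring

lemma two_mul_mul_mul_le_of_abs_mul_abs_le {a d k x y : ℝ} (h : |k| * |d| ≤ a) :
    2 * d * (k * (x * y)) ≤ a * (x ^ 2 + y ^ 2) := by
  have amgm : 2 * |x| * |y| ≤ x ^ 2 + y ^ 2 := by
    simpa only [sq_abs] using two_mul_le_add_sq |x| |y|
  calc 2 * d * (k * (x * y)) ≤ |2 * d * (k * (x * y))| := le_abs_self _
    _ = |k| * |d| * (2 * |x| * |y|) := by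
      simp only [abs_mul, Nat.abs_ofNat]
      ring
    _ ≤ a * (x ^ 2 + y ^ 2) := mul_le_mul h amgm (by positivity) (h.trans' (by positivity))

lemma sum_mul_add_succ_le {n : ℕ} {r : ℝ} {a f x : ℕ → ℝ} (hx : ∀ l, 0 ≤ x l)
    (han : 0 ≤ a n) (h0 : a 0 ≤ r * f 0) (hsucc : ∀ l < n, a l + a (l + 1) ≤ r * f (l + 1)) :
    ∑ l ∈ range n, a l * (x l + x (l + 1)) ≤ r * ∑ l ∈ range (n + 1), f l * x l := by
  suffices ∀ m ≤ n, ∑ l ∈ range m, a l * (x l + x (l + 1)) + a m * x m ≤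
      r * ∑ l ∈ range (m + 1), f l * x l from
    (le_add_of_nonneg_right (mul_nonneg han (hx n))).trans (this n le_rfl)
  intro m
  induction m with
  | zero =>
    intro _
    simpa [mul_assoc] using mul_le_mul_of_nonneg_right h0 (hx 0)
  | succ m ih =>
    intro hm
    have new_term := mul_le_mul_of_nonneg_right (hsucc m hm) (hx (m + 1))
    rw [sum_range_succ, sum_range_succ _ (m + 1), mul_add]
    linarith [ih (Nat.le_of_succ_le hm)]

lemma le_mul_exp_of_hasDerivAt_of_le_mul {g g' : ℝ → ℝ} {r t : ℝ}
    (hg : ∀ s, HasDerivAt g (g' s) s) (hle : ∀ s, g' s ≤ r * g s) (ht : 0 ≤ t) :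
    g t ≤ g 0 * Real.exp (r * t) := by
  have gronwall := le_gronwallBound_of_liminf_deriv_right_le (ε := 0) (b := t)
    (fun s _ => (hg s).continuousAt.continuousWithinAt)
    (fun s _ _ hs => (hg s).hasDerivWithinAt.liminf_right_slope_le hs) le_rfl
    (fun s _ => by simpa only [add_zero] using hle s) t (Set.right_mem_Icc.2 ht)
  rwa [gronwallBound_ε0, sub_zero] at gronwall

lemma eventually_rpow_lt_mul_floor_rpow {α β C : ℝ} (hα : 0 < α) (hβ : β < α) (hC : 0 < C) :
    ∀ᶠ x : ℝ in atTop, x ^ β < C * ⌊x ^ α⌋₊ := by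
  filter_upwards [(tendsto_rpow_atTop (sub_pos.2 hβ)).eventually_ge_atTop (2 / C),
    eventually_ge_atTop 1] with x hgap hx
  have hx0 : 0 < x := zero_lt_one.trans_le hx
  calc x ^ β = C * (x ^ β * (2 / C) / 2) := by field_simp
    _ ≤ C * (x ^ β * x ^ (α - β) / 2) := by gcongr
    _ = C * (x ^ α / 2) := by rw [← Real.rpow_add hx0, add_sub_cancel]
    _ < C * ⌊x ^ α⌋₊ := by
      gcongr
      exact Nat.div_two_lt_floor (Real.one_le_rpow hx hα.le)

/-- The continuous-time quantum walk on `{0, …, n}` with hopping rates `K` and real amplitudes `φ`,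
started at `0`. The site left of `0` is removed by the case distinction in the equation of motion,
and the site right of `n` by requiring `K n = 0`; values of `φ` beyond `n` are irrelevant. -/
structure IsQuantumWalk_s12 (n : ℕ) (K φ : ℕ → ℝ → ℝ) : Prop where
  rate_last : ∀ t, K n t = 0
  hasDerivAt : ∀ l ≤ n, ∀ t, HasDerivAt (φ l)
    ((if l = 0 then 0 else K (l - 1) t * φ (l - 1) t) - K l t * φ (l + 1) t) t
  init_zero : φ 0 0 = 1
  init_pos : ∀ l ≤ n, 0 < l → φ l 0 = 0

/-- The expectation `E[f(l)]` at time `t`, where `l ∈ {0, …, n}` has weight `φ l t ^ 2`. -/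
noncomputable def walkExpectation (n : ℕ) (φ : ℕ → ℝ → ℝ) (f : ℕ → ℝ) (t : ℝ) : ℝ :=
  ∑ l ∈ range (n + 1), f l * φ l t ^ 2

section Expectation

variable {n : ℕ} {φ : ℕ → ℝ → ℝ} {f g : ℕ → ℝ} {t : ℝ}

lemma walkExpectation_mono (h : ∀ l ≤ n, f l ≤ g l) :
    walkExpectation n φ f t ≤ walkExpectation n φ g t :=
  sum_le_sum fun l hl =>
    mul_le_mul_of_nonneg_right (h l (mem_range_succ_iff.1 hl)) (sq_nonneg _)

lemma walkExpectation_const_mul (a : ℝ) :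
    walkExpectation n φ (fun l => a * f l) t = a * walkExpectation n φ f t := by
  simp only [walkExpectation, mul_sum, mul_assoc]

lemma mul_walkExpectation_id_le {M : ℕ} (hM : M ≤ n) :
    M * walkExpectation n φ (fun l => l) t ≤
      n * walkExpectation n φ (fun l => min (l : ℝ) M) t := by
  rw [← walkExpectation_const_mul, ← walkExpectation_const_mul]
  refine walkExpectation_mono fun l hl => ?_
  have hM' : (M : ℝ) ≤ n := Nat.cast_le.2 hM
  have hl' : (l : ℝ) ≤ n := Nat.cast_le.2 hl
  rcases le_total (l : ℝ) M with hlM | hMl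
  · rw [min_eq_left hlM]
    gcongr
  · rw [min_eq_right hMl, mul_comm]
    gcongr

end Expectation

/-- The weight whose expectation obeys a closed differential inequality: it is constant from `M` on,
so rates beyond `M` do not matter, and its value `2 l + 1` below `M` is the sum of the linear rate
bounds, `l` and `l + 1`, on the two edges at `l`. -/
noncomputable def truncatedWeight (M l : ℕ) : ℝ := 2 * min (l : ℝ) M + 1

/-- The bound on the flow of `truncatedWeight M` across the edge `{l, l + 1}` for rates at most
`c * (l + 1)`. -/
noncomputable def truncatedFlow (c : ℝ) (M l : ℕ) : ℝ := if l < M then 2 * c * (l + 1) else 0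

section Truncation

variable {c k : ℝ} {M l : ℕ}

lemma truncatedWeight_of_le (h : l ≤ M) : truncatedWeight M l = 2 * l + 1 := by
  rw [truncatedWeight, min_eq_left (Nat.cast_le.2 h)]

lemma truncatedWeight_of_ge (h : M ≤ l) : truncatedWeight M l = 2 * M + 1 := by
  rw [truncatedWeight, min_eq_right (Nat.cast_le.2 h)]

lemma truncatedFlow_nonneg (hc : 0 ≤ c) (l : ℕ) : 0 ≤ truncatedFlow c M l := by
  unfold truncatedFlow
  split_ifs <;> positivity

lemma truncatedFlow_le (hc : 0 ≤ c) (l : ℕ) : truncatedFlow c M l ≤ 2 * c * (l + 1) := by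
  unfold truncatedFlow
  split_ifs
  · exact le_rfl
  · positivity

lemma truncatedFlow_zero_le (hc : 0 ≤ c) :
    truncatedFlow c M 0 ≤ 2 * c * truncatedWeight M 0 := by
  simpa [truncatedWeight] using truncatedFlow_le (M := M) hc 0

lemma truncatedFlow_add_succ_le (hc : 0 ≤ c) (l : ℕ) :
    truncatedFlow c M l + truncatedFlow c M (l + 1) ≤ 2 * c * truncatedWeight M (l + 1) := by
  rcases Nat.lt_or_ge l M with hl | hl
  · have left_flow := truncatedFlow_le (M := M) hc l
    have right_flow := truncatedFlow_le (M := M) hc (l + 1)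
    rw [truncatedWeight_of_le (Nat.succ_le_of_lt hl)]
    push_cast at right_flow ⊢
    linarith
  · rw [truncatedWeight_of_ge (by omega), truncatedFlow, truncatedFlow, if_neg (by omega),
      if_neg (by omega), add_zero]
    positivity

lemma abs_mul_abs_truncatedWeight_succ_sub_le (hk : l < M → |k| ≤ c * (l + 1)) :
    |k| * |truncatedWeight M (l + 1) - truncatedWeight M l| ≤ truncatedFlow c M l := by
  rcases Nat.lt_or_ge l M with hl | hl
  · have increment : truncatedWeight M (l + 1) - truncatedWeight M l = 2 := by
      rw [truncatedWeight_of_le hl, truncatedWeight_of_le hl.le]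
      push_cast
      ring
    rw [increment, truncatedFlow, if_pos hl, Nat.abs_ofNat]
    linarith [hk hl]
  · rw [truncatedWeight_of_ge hl, truncatedWeight_of_ge (by omega), sub_self, abs_zero, mul_zero,
      truncatedFlow, if_neg hl.not_gt]

end Truncation

namespace IsQuantumWalk_s12

variable {n M : ℕ} {K φ : ℕ → ℝ → ℝ} {c r t : ℝ} {a f : ℕ → ℝ}

lemma walkExpectation_zero (h : IsQuantumWalk_s12 n K φ) : walkExpectation n φ f 0 = f 0 := by
  rw [walkExpectation, sum_eq_single_of_mem 0 (mem_range.2 n.succ_pos), h.init_zero, one_pow,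
    mul_one]
  intro l hl hl0
  rw [h.init_pos l (mem_range_succ_iff.1 hl) (Nat.pos_of_ne_zero hl0), zero_pow two_ne_zero,
    mul_zero]

lemma hasDerivAt_walkExpectation (h : IsQuantumWalk_s12 n K φ) (f : ℕ → ℝ) (t : ℝ) :
    HasDerivAt (walkExpectation n φ f)
      (∑ l ∈ range n, 2 * (f (l + 1) - f l) * (K l t * (φ l t * φ (l + 1) t))) t := by
  have deriv_sum : HasDerivAt (walkExpectation n φ f) (∑ l ∈ range (n + 1), f l * (2 * φ l t *
      ((if l = 0 then 0 else K (l - 1) t * φ (l - 1) t) - K l t * φ (l + 1) t))) t :=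
    HasDerivAt.fun_sum fun l hl => by
      simpa using ((h.hasDerivAt l (mem_range_succ_iff.1 hl) t).pow 2).const_mul (f l)
  rwa [sum_mul_two_mul_hopping_eq n f (K · t) (φ · t), h.rate_last, zero_mul, mul_zero,
    sub_zero] at deriv_sum

/-- A Schur-type test: `a l` bounds the flow of `f` across the edge `{l, l + 1}`, and the two edges
at each site together carry at most `r` times its weight. -/
lemma walkExpectation_le_mul_exp (h : IsQuantumWalk_s12 n K φ)
    (hK : ∀ l < n, ∀ s, |K l s| * |f (l + 1) - f l| ≤ a l) (han : 0 ≤ a n)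
    (h0 : a 0 ≤ r * f 0) (hsucc : ∀ l < n, a l + a (l + 1) ≤ r * f (l + 1)) (ht : 0 ≤ t) :
    walkExpectation n φ f t ≤ f 0 * Real.exp (r * t) := by
  rw [← h.walkExpectation_zero (f := f)]
  refine le_mul_exp_of_hasDerivAt_of_le_mul (h.hasDerivAt_walkExpectation f) (fun s => ?_) ht
  calc ∑ l ∈ range n, 2 * (f (l + 1) - f l) * (K l s * (φ l s * φ (l + 1) s))
      ≤ ∑ l ∈ range n, a l * (φ l s ^ 2 + φ (l + 1) s ^ 2) :=
        sum_le_sum fun l hl => two_mul_mul_mul_le_of_abs_mul_abs_le (hK l (mem_range.1 hl) s)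
    _ ≤ r * walkExpectation n φ f s :=
        sum_mul_add_succ_le (fun l => sq_nonneg (φ l s)) han h0 hsucc

lemma walkExpectation_truncatedWeight_le_exp (h : IsQuantumWalk_s12 n K φ) (hc : 0 ≤ c)
    (hK : ∀ l < M, ∀ s, |K l s| ≤ c * (l + 1)) (ht : 0 ≤ t) :
    walkExpectation n φ (truncatedWeight M) t ≤ Real.exp (2 * c * t) := by
  simpa [truncatedWeight] using h.walkExpectation_le_mul_exp (r := 2 * c)
    (fun l _ s => abs_mul_abs_truncatedWeight_succ_sub_le fun hl => hK l hl s)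
    (truncatedFlow_nonneg hc n) (truncatedFlow_zero_le hc)
    (fun l _ => truncatedFlow_add_succ_le hc l) ht

lemma two_mul_mul_walkExpectation_id_le_mul_exp (h : IsQuantumWalk_s12 n K φ) (hc : 0 ≤ c) (hM : M ≤ n)
    (hK : ∀ l < M, ∀ s, |K l s| ≤ c * (l + 1)) (ht : 0 ≤ t) :
    2 * M * walkExpectation n φ (fun l => l) t ≤ n * Real.exp (2 * c * t) := by
  calc 2 * M * walkExpectation n φ (fun l => l) t
      = 2 * (M * walkExpectation n φ (fun l => l) t) := mul_assoc _ _ _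
    _ ≤ 2 * (n * walkExpectation n φ (fun l => min (l : ℝ) M) t) := by
      gcongr 2 * ?_
      exact mul_walkExpectation_id_le hM
    _ = n * walkExpectation n φ (fun l => 2 * min (l : ℝ) M) t := by
      rw [walkExpectation_const_mul, mul_left_comm]
    _ ≤ n * walkExpectation n φ (truncatedWeight M) t := by
      gcongr n * ?_
      exact walkExpectation_mono fun l _ => le_add_of_nonneg_right zero_le_one
    _ ≤ n * Real.exp (2 * c * t) := by
      gcongr
      exact h.walkExpectation_truncatedWeight_le_exp hc hK ht

end IsQuantumWalk_s12

theorem walk_scrambling_time_general {b c α κ : ℝ} (hc : 0 ≤ c) (hα : 0 < α) (hκ : 0 < κ)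
    (hb : 2 * c * b < α) :
    ∀ᶠ N : ℕ in atTop, ∀ (n : ℕ) (K φ : ℕ → ℝ → ℝ), IsQuantumWalk_s12 n K φ →
      ⌊(N : ℝ) ^ α⌋₊ ≤ n → (∀ l < ⌊(N : ℝ) ^ α⌋₊, ∀ t, |K l t| ≤ c * (l + 1)) →
      ∀ t ∈ Set.Icc 0 (b * Real.log N), walkExpectation n φ (fun l => l) t < κ * n := by
  filter_upwards [tendsto_natCast_atTop_atTop.eventually
    (eventually_rpow_lt_mul_floor_rpow hα hb (mul_pos two_pos hκ)), eventually_gt_atTop 0]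
    with N hN hN0 n K φ walk hMn hK t ⟨ht0, ht⟩
  have hN0' : (0 : ℝ) < N := Nat.cast_pos.2 hN0
  have exp_lt : Real.exp (2 * c * t) < 2 * κ * ⌊(N : ℝ) ^ α⌋₊ := by
    refine lt_of_le_of_lt ?_ hN
    rw [Real.rpow_def_of_pos hN0', Real.exp_le_exp, mul_comm (Real.log N), mul_assoc (2 * c)]
    gcongr
  set M := ⌊(N : ℝ) ^ α⌋₊
  have hM : (0 : ℝ) < M := pos_of_mul_pos_right ((Real.exp_pos _).trans exp_lt) (by positivity)
  have hn : (0 : ℝ) < n := hM.trans_le (Nat.cast_le.2 hMn)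
  refine lt_of_mul_lt_mul_left ?_ (by positivity : (0 : ℝ) ≤ 2 * M)
  calc 2 * M * walkExpectation n φ (fun l => l) t
      ≤ n * Real.exp (2 * c * t) := walk.two_mul_mul_walkExpectation_id_le_mul_exp hc hMn hK ht0
    _ < n * (2 * κ * M) := by gcongr
    _ = 2 * M * (κ * n) := by ring

/-- Fast scrambling for the quantum walk: with `b := α/(8c(1+e))`, there is `N₀` (depending
only on `c, α, κ, q`) such that for `N > N₀`, any quantum walk with `N′ = ⌈(N−1)/(q−2)⌉` and
rates bounded by `|K_l(t)| ≤ c(l+1)` for `l ≤ M = ⌊N^α⌋ (≤ N′)` satisfies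
`E_{s,t}[l] < κN′` for all `0 ≤ t ≤ b log N`; consequently `t_{s,κ} ≥ b log N`. -/
theorem walk_scrambling_time (c α κ : ℝ) (hc : 0 < c)
    (hα0 : 0 < α) (hα1 : α < 1) (hκ0 : 0 < κ) (hκ1 : κ < 1)
    (q : ℕ) (hqeven : Even q) (hq4 : 4 ≤ q) :
    ∃ N₀ : ℕ, 0 < N₀ ∧ ∀ N : ℕ, N₀ < N →
      ∀ (K : ℕ → ℝ → ℝ) (φ : ℕ → ℝ → ℝ),
      (∀ l, Continuous (K l)) →
      (∀ t : ℝ, K (Nprime N q) t = 0) →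
      (∀ l ≤ Nprime N q, ∀ t : ℝ, HasDerivAt (φ l)
        ((if l = 0 then 0 else K (l - 1) t * φ (l - 1) t) - K l t * φ (l + 1) t) t) →
      φ 0 0 = 1 → (∀ l, 0 < l → φ l 0 = 0) →
      (∀ t : ℝ, ∑ l ∈ Finset.range (Nprime N q + 1), (φ l t) ^ 2 = 1) →
      Nat.floor ((N : ℝ) ^ α) ≤ Nprime N q →
      (∀ l ≤ Nat.floor ((N : ℝ) ^ α), ∀ t : ℝ, |K l t| ≤ c * (l + 1)) →
      ((∀ t : ℝ, 0 ≤ t → t ≤ (α / (8 * c * (1 + Real.exp 1))) * Real.log N →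
          ∑ l ∈ Finset.range (Nprime N q + 1), (l : ℝ) * (φ l t) ^ 2 < κ * Nprime N q) ∧
       (∀ t : ℝ, 0 < t →
          κ * Nprime N q ≤ ∑ l ∈ Finset.range (Nprime N q + 1), (l : ℝ) * (φ l t) ^ 2 →
          (α / (8 * c * (1 + Real.exp 1))) * Real.log N ≤ t)) := by
  have hb : 2 * c * (α / (8 * c * (1 + Real.exp 1))) < α := by
    rw [mul_div_assoc', div_lt_iff₀ (by positivity)]
    nlinarith [mul_pos hc hα0, mul_pos (mul_pos hc hα0) (Real.exp_pos 1)]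
  obtain ⟨N₀, hN₀⟩ := eventually_atTop.1 (walk_scrambling_time_general hc.le hα0 hκ0 hb)
  refine ⟨N₀ + 1, N₀.succ_pos, fun N hN K φ _ hlast hderiv hzero hpos _ hM hK => ?_⟩
  have mean_lt := hN₀ N (by omega) _ K φ ⟨hlast, hderiv, hzero, fun l _ => hpos l⟩ hM
    fun l hl => hK l hl.le
  exact ⟨fun t ht0 ht => mean_lt t ⟨ht0, ht⟩,
    fun t ht0 hle => le_of_not_ge fun ht => (mean_lt t ⟨ht0.le, ht⟩).not_ge hle⟩
end

section
/- For every positive integer n and every nonnegative integer l, the inequality n·(l+1)^{n−1} < e·lⁿ + (e·n)ⁿ holds. -/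
/-!
Put `y = max x p`. Since `1 + 1 / y ≤ exp (1 / y)` and `p - 1 < y`, we have
`(y + 1) ^ (p - 1) ≤ exp ((p - 1) / y) * y ^ (p - 1) < e * y ^ (p - 1)`, and hence
`p * (x + 1) ^ (p - 1) < e * y ^ p`. According to which of `x` and `p` is the larger, the right-hand
side is `e * x ^ p` or `e * p ^ p ≤ (e * p) ^ p`.
-/

open Real

theorem add_rpow_le_exp_mul_rpow {a q y : ℝ} (hy : 0 < y) (hya : 0 ≤ y + a) (hq : 0 ≤ q) :
    (y + a) ^ q ≤ exp (q * a / y) * y ^ q := by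
  have base_le : y + a ≤ exp (a / y) * y := by
    calc y + a = (a / y + 1) * y := by field_simp; ring
      _ ≤ exp (a / y) * y := by gcongr; exact add_one_le_exp _
  calc (y + a) ^ q ≤ (exp (a / y) * y) ^ q := rpow_le_rpow hya base_le hq
    _ = exp (q * a / y) * y ^ q := by
      rw [mul_rpow (exp_pos _).le hy.le, ← exp_mul, div_mul_eq_mul_div, mul_comm a]

theorem mul_add_one_rpow_sub_one_lt_exp_one_mul_rpow {p y : ℝ} (hp : 1 ≤ p) (hpy : p ≤ y) :
    p * (y + 1) ^ (p - 1) < exp 1 * y ^ p := by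
  have hy : 0 < y := by linarith
  have exponent_lt : (p - 1) * 1 / y < 1 := by
    rw [mul_one, div_lt_one hy]
    linarith
  calc p * (y + 1) ^ (p - 1) ≤ y * (exp ((p - 1) * 1 / y) * y ^ (p - 1)) := by
        gcongr
        exact add_rpow_le_exp_mul_rpow hy (by linarith) (by linarith)
    _ < y * (exp 1 * y ^ (p - 1)) := by gcongr
    _ = exp 1 * y ^ p := by
      rw [rpow_sub_one hy.ne']
      field_simp

theorem exp_one_mul_rpow_self_le {p : ℝ} (hp : 1 ≤ p) : exp 1 * p ^ p ≤ (exp 1 * p) ^ p := by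
  rw [mul_rpow (exp_pos 1).le (by linarith), exp_one_rpow]
  gcongr

theorem exp_one_mul_max_rpow_le {p x : ℝ} (hp : 1 ≤ p) (hx : 0 ≤ x) :
    exp 1 * max x p ^ p ≤ exp 1 * x ^ p + (exp 1 * p) ^ p := by
  rcases le_total p x with hpx | hxp
  · rw [max_eq_left hpx]
    exact le_add_of_nonneg_right (by positivity)
  · rw [max_eq_right hxp]
    exact le_add_of_nonneg_of_le (by positivity) (exp_one_mul_rpow_self_le hp)

theorem poly_exp_inequality_general {p x : ℝ} (hp : 1 ≤ p) (hx : 0 ≤ x) :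
    p * (x + 1) ^ (p - 1) < exp 1 * x ^ p + (exp 1 * p) ^ p := by
  calc p * (x + 1) ^ (p - 1) ≤ p * (max x p + 1) ^ (p - 1) := by
        gcongr
        exact le_max_left x p
    _ < exp 1 * max x p ^ p :=
      mul_add_one_rpow_sub_one_lt_exp_one_mul_rpow hp (le_max_right x p)
    _ ≤ exp 1 * x ^ p + (exp 1 * p) ^ p := exp_one_mul_max_rpow_le hp hx

/-- For every positive integer `n` and nonnegative integer `l`,
`n(l+1)^{n−1} < e·lⁿ + (en)ⁿ`. -/
theorem poly_exp_inequality (n : ℕ) (hn : 0 < n) (l : ℕ) :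
    (n : ℝ) * ((l : ℝ) + 1) ^ (n - 1) <
      Real.exp 1 * (l : ℝ) ^ n + (Real.exp 1 * n) ^ n := by
  simpa only [← Nat.cast_pred hn, rpow_natCast] using
    poly_exp_inequality_general (p := n) (mod_cast hn) l.cast_nonneg
end
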